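/- Let d ≥ 1, let α = (α_1,…,α_d) with each α_i > −1 and β > −1, and let u be the Appell moment functional ⟨u, f⟩ = ∫_{T_d} f(x) x_1^{α_1}⋯x_d^{α_d} (1−|x|)^β dx on the d-simplex. Then u satisfies the matrix Pearson equation div(Φ u) = Ψ^t u, i.e., ⟨u, Φ∇f + Ψf⟩ = 0 for every polynomial f, where Φ is the symmetric d×d polynomial matrix with entries φ_ii = x_i(x_i − 1) and φ_ij = x_i x_j for i ≠ j, and Ψ is the d×1 polynomial vector with entries ψ_i = (|α| + β + d + 1) x_i − (α_i + 1). In particular deg Φ = 2 and deg Ψ = 1, so u satisfies a Pearson equation with s = max{deg Φ − 2, deg Ψ − 1} = 0 (u is classical). -/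

import Mathlib

open MvPolynomial Matrix Finset MeasureTheory

noncomputable section

/-- Real polynomials in `d` variables. -/
abbrev MPoly (d : ℕ) := MvPolynomial (Fin d) ℝ

/-- A moment functional: a linear functional on `MPoly d`. -/
abbrev MomF (d : ℕ) := MPoly d →ₗ[ℝ] ℝ

/-- `r_n = binom(n + d - 1, n)`, the dimension of the space of homogeneous
polynomials of degree `n` in `d` variables. -/
def rdim (d n : ℕ) : ℕ := (n + d - 1).choose n

/-- Entrywise application of a moment functional to a polynomial matrix. -/
def mApply {d : ℕ} (u : MomF d) {m n : Type*} (M : Matrix m n (MPoly d)) : Matrix m n ℝ :=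
  Matrix.of fun i j => u (M i j)

/-- The matrix Pearson equation `div(Φ u) = Ψᵗ u`, i.e. `⟨u, Φ ∇f + Ψ f⟩ = 0`
for every polynomial `f` (a system of `d` scalar equations). -/
def Pearson {d : ℕ} (u : MomF d) (Φ : Matrix (Fin d) (Fin d) (MPoly d))
    (Ψ : Fin d → MPoly d) : Prop :=
  ∀ f : MPoly d, ∀ i : Fin d, u (∑ j, Φ i j * pderiv j f + Ψ i * f) = 0

/-- Degree of a polynomial matrix: max of total degrees of the entries. -/
def matDeg {d : ℕ} {m n : Type*} [Fintype m] [Fintype n]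
    (M : Matrix m n (MPoly d)) : ℕ :=
  Finset.univ.sup fun p : m × n => (M p.1 p.2).totalDegree

/-- Degree of a polynomial (column) vector. -/
def vecDeg {d : ℕ} {m : Type*} [Fintype m] (v : m → MPoly d) : ℕ :=
  Finset.univ.sup fun i => (v i).totalDegree

/-- The Jacobian `∇ℙᵗ`: the `d × m` matrix with `(i,k)` entry `∂ᵢ P k`. -/
def gradT {d m : ℕ} (P : Fin m → MPoly d) : Matrix (Fin d) (Fin m) (MPoly d) :=
  Matrix.of fun i k => pderiv i (P k)

/-- The Kronecker product `I_d ⊗ ℙᵗ`: the block-diagonal `d × (d·m)` matrix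
whose `d` diagonal blocks equal the row vector `ℙᵗ`. -/
def kronIdRow {d m : ℕ} (P : Fin m → MPoly d) :
    Matrix (Fin d) (Fin d × Fin m) (MPoly d) :=
  Matrix.of fun i jk => if i = jk.1 then P jk.2 else 0

/-- A constant real matrix viewed as a polynomial matrix. -/
def cmap {d : ℕ} {m n : Type*} (F : Matrix m n ℝ) : Matrix m n (MPoly d) :=
  F.map MvPolynomial.C

/-- `{ℙ_n}` is a weak orthogonal polynomial system with respect to `u`:
each entry of `ℙ_n` has total degree `n`, the entries of `ℙ_0, …, ℙ_n` form a
basis of the polynomials of total degree at most `n` (spanning + linear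
independence), `⟨u, ℙ_n ℙ_mᵗ⟩ = 0` for `n ≠ m`, and `H_n = ⟨u, ℙ_n ℙ_nᵗ⟩` is
nonsingular. -/
structure IsWOPS {d : ℕ} (u : MomF d) (P : (n : ℕ) → Fin (rdim d n) → MPoly d) : Prop where
  deg : ∀ n k, (P n k).totalDegree = n
  span : ∀ n : ℕ, MvPolynomial.restrictTotalDegree (Fin d) ℝ n ≤
    Submodule.span ℝ {g | ∃ m ≤ n, ∃ k, P m k = g}
  indep : LinearIndependent ℝ (fun p : (n : ℕ) × Fin (rdim d n) => P p.1 p.2)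
  orth : ∀ m n, m ≠ n → ∀ j k, u (P m j * P n k) = 0
  Hdet : ∀ n, (Matrix.of fun j k : Fin (rdim d n) => u (P n j * P n k)).det ≠ 0

/-- The matrix `H_n = ⟨u, ℙ_n ℙ_nᵗ⟩`. -/
def Hmat {d : ℕ} (u : MomF d) (P : (n : ℕ) → Fin (rdim d n) → MPoly d) (n : ℕ) :
    Matrix (Fin (rdim d n)) (Fin (rdim d n)) ℝ :=
  Matrix.of fun j k => u (P n j * P n k)

/-- The second-order differential operator
`L[f] = Σ_{i,j} φ_ij ∂²f/∂xᵢ∂xⱼ + Σ_i ψ_i ∂f/∂xᵢ` associated with `Φ`, `Ψ`. -/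
def Lop {d : ℕ} (Φ : Matrix (Fin d) (Fin d) (MPoly d)) (Ψ : Fin d → MPoly d)
    (f : MPoly d) : MPoly d :=
  (∑ i, ∑ j, Φ i j * pderiv i (pderiv j f)) + ∑ i, Ψ i * pderiv i f

/-- The `d`-simplex `T_d = {x : xᵢ ≥ 0, 1 − |x| ≥ 0}`. -/
def simplexSet (d : ℕ) : Set (Fin d → ℝ) :=
  {x | (∀ i, 0 ≤ x i) ∧ ∑ i, x i ≤ 1}

/-- The Appell weight `x^α (1 − |x|)^β` (real powers). -/
def appellWeight {d : ℕ} (α : Fin d → ℝ) (β : ℝ) (x : Fin d → ℝ) : ℝ :=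
  (∏ i, x i ^ α i) * (1 - ∑ i, x i) ^ β

/-- The Appell moment functional `⟨u, f⟩ = ∫_{T_d} f(x) x^α (1 − |x|)^β dx`. -/
def appellInt {d : ℕ} (α : Fin d → ℝ) (β : ℝ) (f : MPoly d) : ℝ :=
  ∫ x in simplexSet d, MvPolynomial.eval x f * appellWeight α β x

/-! The functional is determined by its moments on monomials, and `xⁿ` times the Appell weight is
the Appell weight with exponents `α + n`, so every moment is a Dirichlet integral
`∏ᵢ Γ(αᵢ + nᵢ + 1) · Γ(β + 1) / Γ(|α| + |n| + β + d + 1)`. Integrating out the first coordinate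
gives a Beta factor and leaves a Dirichlet integral in one variable fewer, with the first exponent
plus one absorbed into `β`; this proves the formula by induction on `d`. On `xⁿ`, Euler's identity
turns the `i`-th Pearson equation into a relation between the moments of `xᵢ xⁿ` and `xⁿ`, which
is `Γ(s + 1) = s Γ(s)` applied in the numerator and in the denominator. -/

open scoped ENNReal

section GeneralLemmas

lemma ae_linearMap_ne {E : Type*} [NormedAddCommGroup E] [NormedSpace ℝ E] [MeasurableSpace E]
    [BorelSpace E] [FiniteDimensional ℝ E] (μ : Measure E) [μ.IsAddHaarMeasure]
    (f : E →ₗ[ℝ] ℝ) {c : ℝ} (hc : c ≠ 0) : ∀ᵐ x ∂μ, f x ≠ c := by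
  let s : AffineSubspace ℝ E := (AffineSubspace.mk' c ⊥).comap f.toAffineMap
  have mem_s (x : E) : x ∈ s ↔ f x = c := by simp [s, sub_eq_zero]
  have s_ne_top : s ≠ ⊤ := fun h ↦ hc <| by
    simpa using ((mem_s 0).1 (h ▸ AffineSubspace.mem_top ℝ E 0)).symm
  simpa [ae_iff, ← mem_s] using Measure.addHaar_affineSubspace μ s s_ne_top

lemma lintegral_rpow_mul_sub_rpow {p q c : ℝ} (hp : -1 < p) (hq : -1 < q) (hc : 0 < c) :
    ∫⁻ t in Set.Ioo 0 c, ENNReal.ofReal (t ^ p * (c - t) ^ q) =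
      ENNReal.ofReal (ProbabilityTheory.beta (p + 1) (q + 1) * c ^ (p + q + 1)) := by
  have hB := ProbabilityTheory.beta_pos (neg_lt_iff_pos_add.1 hp) (neg_lt_iff_pos_add.1 hq)
  have lintegral_pdf := ProbabilityTheory.lintegral_betaPDF_eq_one
    (neg_lt_iff_pos_add.1 hp) (neg_lt_iff_pos_add.1 hq)
  rw [ProbabilityTheory.lintegral_betaPDF] at lintegral_pdf
  set B := ProbabilityTheory.beta (p + 1) (q + 1)
  have image_Ioo : (c * ·) '' Set.Ioo 0 1 = Set.Ioo 0 c := by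
    simp [Set.image_mul_left_Ioo hc]
  have rescale : ∀ s ∈ Set.Ioo (0 : ℝ) 1,
      ENNReal.ofReal |c| * ENNReal.ofReal ((c * s) ^ p * (c - c * s) ^ q) =
        ENNReal.ofReal (B * c ^ (p + q + 1)) *
          ENNReal.ofReal (1 / B * s ^ (p + 1 - 1) * (1 - s) ^ (q + 1 - 1)) := by
    rintro s ⟨hs0, hs1⟩
    rw [← ENNReal.ofReal_mul (abs_nonneg c), ← ENNReal.ofReal_mul (by positivity), abs_of_pos hc,
      ← mul_one_sub, Real.mul_rpow hc.le hs0.le, Real.mul_rpow hc.le (sub_nonneg.2 hs1.le),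
      Real.rpow_add_one hc.ne', Real.rpow_add hc, add_sub_cancel_right, add_sub_cancel_right]
    congr 1
    field_simp
  rw [← image_Ioo, lintegral_image_eq_lintegral_abs_deriv_mul measurableSet_Ioo
      (fun s _ ↦ (hasDerivAt_const_mul c).hasDerivWithinAt)
      (mul_right_injective₀ hc.ne').injOn,
    setLIntegral_congr_fun measurableSet_Ioo rescale, lintegral_const_mul _ (by fun_prop),
    lintegral_pdf, mul_one]

lemma totalDegree_C_mul_X_sub_C {σ R : Type*} [CommRing R] {a : R} (ha : a ≠ 0) (b : R) (i : σ) :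
    (C a * X i - C b : MvPolynomial σ R).totalDegree = 1 := by
  have h : (C a * X i : MvPolynomial σ R).totalDegree = 1 := by
    rw [C_mul_X_eq_monomial, totalDegree_monomial _ ha, Finsupp.sum_single_index rfl]
  rw [sub_eq_add_neg, totalDegree_add_eq_left_of_totalDegree_lt, h]
  simp [h]

lemma neg_one_lt_add_natCast {a : ℝ} (ha : -1 < a) (n : ℕ) : -1 < a + n :=
  ha.trans_le (le_add_of_nonneg_right n.cast_nonneg)

lemma sum_add_card_pos {ι : Type*} [Fintype ι] {a : ι → ℝ} {b : ℝ}
    (ha : ∀ i, -1 < a i) (hb : -1 < b) : 0 < ∑ i, a i + b + Fintype.card ι + 1 := by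
  have h : 0 ≤ ∑ i, (a i + 1) := sum_nonneg fun i _ ↦ by linarith [ha i]
  simp only [sum_add_distrib, sum_const, card_univ, nsmul_eq_mul, mul_one] at h
  linarith

end GeneralLemmas

section DirichletIntegral

variable {d : ℕ}

/-- The multivariate Beta function `B(a₁ + 1, …, a_d + 1, b + 1)`. The arguments are the exponents
of the Appell weight, so that it is the value of the Dirichlet integral
`∫ x₁^{a₁} ⋯ x_d^{a_d} (1 - |x|)^b` over the simplex. -/
def multivariateBeta (a : Fin d → ℝ) (b : ℝ) : ℝ :=
  (∏ i, Real.Gamma (a i + 1)) * Real.Gamma (b + 1) / Real.Gamma (∑ i, a i + b + d + 1)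

lemma multivariateBeta_zero (a : Fin 0 → ℝ) {b : ℝ} (hb : -1 < b) : multivariateBeta a b = 1 := by
  simp [multivariateBeta, (Real.Gamma_pos_of_pos (neg_lt_iff_pos_add.1 hb)).ne']

lemma multivariateBeta_succ {a : Fin (d + 1) → ℝ} {b : ℝ} (hab : 0 < a 0 + b + 2) :
    multivariateBeta a b = ProbabilityTheory.beta (a 0 + 1) (b + 1) *
      multivariateBeta (Fin.tail a) (a 0 + b + 1) := by
  have hΓ : Real.Gamma (a 0 + b + 2) ≠ 0 := (Real.Gamma_pos_of_pos hab).ne'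
  have total : ∑ i, a i + b + (d + 1 : ℕ) + 1 = ∑ i, Fin.tail a i + (a 0 + b + 1) + d + 1 := by
    rw [Fin.sum_univ_succ]
    push_cast [Fin.tail]
    ring
  rw [multivariateBeta, multivariateBeta, ProbabilityTheory.beta, total, Fin.prod_univ_succ,
    show a 0 + 1 + (b + 1) = a 0 + b + 2 by ring, show a 0 + b + 1 + 1 = a 0 + b + 2 by ring]
  simp only [Fin.tail]
  field_simp

lemma multivariateBeta_nonneg {a : Fin d → ℝ} {b : ℝ} (ha : ∀ i, -1 < a i) (hb : -1 < b) :
    0 ≤ multivariateBeta a b := by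
  have htotal := sum_add_card_pos ha hb
  rw [Fintype.card_fin] at htotal
  exact div_nonneg (mul_nonneg
    (prod_nonneg fun i _ ↦ Real.Gamma_nonneg_of_nonneg (neg_lt_iff_pos_add.1 (ha i)).le)
    (Real.Gamma_nonneg_of_nonneg (neg_lt_iff_pos_add.1 hb).le))
    (Real.Gamma_nonneg_of_nonneg htotal.le)

lemma multivariateBeta_add_single {a : Fin d → ℝ} {b : ℝ} (i : Fin d) (hai : a i + 1 ≠ 0)
    (htotal : ∑ j, a j + b + d + 1 ≠ 0) :
    (∑ j, a j + b + d + 1) * multivariateBeta (a + Pi.single i 1) b =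
      (a i + 1) * multivariateBeta a b := by
  have numerator : ∏ j, Real.Gamma ((a + Pi.single i 1 : Fin d → ℝ) j + 1) =
      (a i + 1) * ∏ j, Real.Gamma (a j + 1) := by
    have factor (j : Fin d) : Real.Gamma ((a + Pi.single i 1 : Fin d → ℝ) j + 1) =
        (if j = i then a i + 1 else 1) * Real.Gamma (a j + 1) := by
      obtain rfl | hj := eq_or_ne j i
      · simp [Real.Gamma_add_one hai]
      · simp [hj]
    simp only [factor, prod_mul_distrib, prod_ite_eq', mem_univ, if_true]
  have denominator : ∑ j, (a + Pi.single i 1 : Fin d → ℝ) j + b + d + 1 =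
      ∑ j, a j + b + d + 1 + 1 := by
    simp only [Pi.add_apply, sum_add_distrib, sum_pi_single', mem_univ, if_true]
    ring
  rw [multivariateBeta, multivariateBeta, numerator, denominator, Real.Gamma_add_one htotal]
  field_simp

lemma measurableSet_simplexSet (d : ℕ) : MeasurableSet (simplexSet d) := by
  unfold simplexSet
  measurability

lemma cons_mem_simplexSet {t : ℝ} {y : Fin d → ℝ} :
    (Fin.cons t y : Fin (d + 1) → ℝ) ∈ simplexSet (d + 1) ↔
      y ∈ simplexSet d ∧ t ∈ Set.Icc 0 (1 - ∑ i, y i) := by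
  simp only [simplexSet, Set.mem_ofPred_eq, Fin.forall_fin_succ, Fin.sum_univ_succ, Fin.cons_zero,
    Fin.cons_succ, Set.mem_Icc, le_sub_iff_add_le]
  constructor
  · rintro ⟨⟨ht, hy⟩, hsum⟩
    exact ⟨⟨hy, by linarith⟩, ht, hsum⟩
  · rintro ⟨⟨hy, -⟩, ht, hsum⟩
    exact ⟨⟨ht, hy⟩, hsum⟩

lemma lintegral_simplexSet_succ {f : (Fin (d + 1) → ℝ) → ℝ≥0∞} (hf : Measurable f) :
    ∫⁻ x in simplexSet (d + 1), f x =
      ∫⁻ y in simplexSet d, ∫⁻ t in Set.Icc 0 (1 - ∑ i, y i), f (Fin.cons t y) := by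
  have hF : Measurable ((simplexSet (d + 1)).indicator f) :=
    hf.indicator (measurableSet_simplexSet _)
  have split := (volume_preserving_piFinSuccAbove (fun _ : Fin (d + 1) ↦ ℝ) 0).symm
  rw [← lintegral_indicator (measurableSet_simplexSet _), ← split.lintegral_comp hF,
    Measure.volume_eq_prod,
    lintegral_prod_symm' _ (by exact hF.comp split.measurable),
    ← lintegral_indicator (measurableSet_simplexSet _)]
  refine lintegral_congr fun y ↦ ?_
  simp only [MeasurableEquiv.piFinSuccAbove_symm_apply, Fin.insertNthEquiv_zero, Fin.consEquiv]
  by_cases hy : y ∈ simplexSet d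
  · rw [Set.indicator_of_mem hy, ← lintegral_indicator measurableSet_Icc]
    simp [Set.indicator, cons_mem_simplexSet, hy]
  · simp [Set.indicator, cons_mem_simplexSet, hy]

lemma measurable_appellWeight (a : Fin d → ℝ) (b : ℝ) : Measurable (appellWeight a b) := by
  unfold appellWeight
  fun_prop

lemma appellWeight_nonneg (a : Fin d → ℝ) (b : ℝ) {x : Fin d → ℝ} (hx : x ∈ simplexSet d) :
    0 ≤ appellWeight a b x :=
  mul_nonneg (prod_nonneg fun i _ ↦ Real.rpow_nonneg (hx.1 i) _)
    (Real.rpow_nonneg (sub_nonneg.2 hx.2) _)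

lemma appellWeight_nonneg_ae (a : Fin d → ℝ) (b : ℝ) :
    0 ≤ᵐ[volume.restrict (simplexSet d)] appellWeight a b :=
  ae_restrict_of_forall_mem (measurableSet_simplexSet d) fun _ ↦ appellWeight_nonneg a b

lemma appellWeight_cons (a : Fin (d + 1) → ℝ) (b t : ℝ) (y : Fin d → ℝ) :
    appellWeight a b (Fin.cons t y) =
      (∏ i, y i ^ Fin.tail a i) * (t ^ a 0 * (1 - ∑ i, y i - t) ^ b) := by
  simp only [appellWeight, Fin.prod_univ_succ, Fin.sum_univ_succ, Fin.cons_zero, Fin.cons_succ,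
    Fin.tail, sub_add_eq_sub_sub_swap]
  ring

lemma lintegral_appellWeight_cons {a : Fin (d + 1) → ℝ} {b : ℝ} (ha : -1 < a 0) (hb : -1 < b)
    {y : Fin d → ℝ} (hy : y ∈ simplexSet d) (hy_sum : ∑ i, y i ≠ 1) :
    ∫⁻ t in Set.Icc 0 (1 - ∑ i, y i), ENNReal.ofReal (appellWeight a b (Fin.cons t y)) =
      ENNReal.ofReal (ProbabilityTheory.beta (a 0 + 1) (b + 1)) *
        ENNReal.ofReal (appellWeight (Fin.tail a) (a 0 + b + 1) y) := by
  have hB := ProbabilityTheory.beta_pos (neg_lt_iff_pos_add.1 ha) (neg_lt_iff_pos_add.1 hb)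
  have hprod : 0 ≤ ∏ i, y i ^ Fin.tail a i := prod_nonneg fun i _ ↦ Real.rpow_nonneg (hy.1 i) _
  have hslice : 0 < 1 - ∑ i, y i := sub_pos.2 (hy.2.lt_of_ne hy_sum)
  rw [Measure.restrict_congr_set Ioo_ae_eq_Icc.symm]
  simp only [appellWeight_cons, ENNReal.ofReal_mul hprod]
  rw [lintegral_const_mul _ (by fun_prop), lintegral_rpow_mul_sub_rpow ha hb hslice,
    ← ENNReal.ofReal_mul hprod, ← ENNReal.ofReal_mul hB.le, appellWeight]
  congr 1
  ring

theorem lintegral_appellWeight {a : Fin d → ℝ} {b : ℝ} (ha : ∀ i, -1 < a i) (hb : -1 < b) :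
    ∫⁻ x in simplexSet d, ENNReal.ofReal (appellWeight a b x) =
      ENNReal.ofReal (multivariateBeta a b) := by
  induction d generalizing b with
  | zero =>
    rw [multivariateBeta_zero a hb]
    simp [appellWeight, simplexSet, volume_pi]
  | succ d ih =>
    have ha0 := ha 0
    have hB := ProbabilityTheory.beta_pos (neg_lt_iff_pos_add.1 ha0) (neg_lt_iff_pos_add.1 hb)
    -- Where `|y| = 1` the slice is a point, but `(1 - |y|) ^ (a 0 + b + 1)` is `0 ^ 0 = 1` if
    -- `a 0 + b + 1 = 0`.
    have sum_ne_one : ∀ᵐ y : Fin d → ℝ, ∑ i, y i ≠ 1 := by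
      simpa using ae_linearMap_ne volume (∑ i, LinearMap.proj i : (Fin d → ℝ) →ₗ[ℝ] ℝ) one_ne_zero
    calc ∫⁻ x in simplexSet (d + 1), ENNReal.ofReal (appellWeight a b x)
        = ∫⁻ y in simplexSet d, ∫⁻ t in Set.Icc 0 (1 - ∑ i, y i),
            ENNReal.ofReal (appellWeight a b (Fin.cons t y)) :=
          lintegral_simplexSet_succ (measurable_appellWeight a b).ennreal_ofReal
      _ = ∫⁻ y in simplexSet d, ENNReal.ofReal (ProbabilityTheory.beta (a 0 + 1) (b + 1)) *
            ENNReal.ofReal (appellWeight (Fin.tail a) (a 0 + b + 1) y) :=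
          setLIntegral_congr_fun_ae (measurableSet_simplexSet d) <| sum_ne_one.mono
            fun y hy_sum hy ↦ lintegral_appellWeight_cons ha0 hb hy hy_sum
      _ = ENNReal.ofReal (ProbabilityTheory.beta (a 0 + 1) (b + 1)) *
            ENNReal.ofReal (multivariateBeta (Fin.tail a) (a 0 + b + 1)) := by
          rw [lintegral_const_mul _ (measurable_appellWeight _ _).ennreal_ofReal,
            ih (a := Fin.tail a) (fun i ↦ ha i.succ) (by linarith)]
      _ = ENNReal.ofReal (multivariateBeta a b) := by
          rw [← ENNReal.ofReal_mul hB.le, multivariateBeta_succ (by linarith)]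

lemma integrableOn_appellWeight {a : Fin d → ℝ} {b : ℝ} (ha : ∀ i, -1 < a i) (hb : -1 < b) :
    IntegrableOn (appellWeight a b) (simplexSet d) := by
  refine ⟨(measurable_appellWeight a b).aestronglyMeasurable, ?_⟩
  rw [hasFiniteIntegral_iff_ofReal (appellWeight_nonneg_ae a b), lintegral_appellWeight ha hb]
  exact ENNReal.ofReal_lt_top

theorem integral_appellWeight {a : Fin d → ℝ} {b : ℝ} (ha : ∀ i, -1 < a i) (hb : -1 < b) :
    ∫ x in simplexSet d, appellWeight a b x = multivariateBeta a b := by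
  rw [integral_eq_lintegral_of_nonneg_ae (appellWeight_nonneg_ae a b)
    (measurable_appellWeight a b).aestronglyMeasurable, lintegral_appellWeight ha hb,
    ENNReal.toReal_ofReal (multivariateBeta_nonneg ha hb)]

end DirichletIntegral

section AppellFunctional

variable {d : ℕ} {α : Fin d → ℝ} {β : ℝ}

lemma eval_monomial_mul_appellWeight (hα : ∀ i, -1 < α i) (β : ℝ) (n : Fin d →₀ ℕ) (c : ℝ)
    {x : Fin d → ℝ} (hx : x ∈ simplexSet d) :
    eval x (monomial n c) * appellWeight α β x = c * appellWeight (fun i ↦ α i + n i) β x := by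
  -- `0 ^ s * 0 ^ t = 0 ^ (s + t)` fails if `s + t = 0 ≠ s`; here `α i > -1` excludes that case.
  have rpow_shift (i : Fin d) : x i ^ (α i + n i) = x i ^ α i * x i ^ n i := by
    obtain hn | hn := Nat.eq_zero_or_pos (n i)
    · simp [hn]
    · have : (1 : ℝ) ≤ n i := mod_cast hn
      exact Real.rpow_add_natCast' (hx.1 i) (by linarith [hα i])
  simp only [eval_monomial, Finsupp.prod_fintype _ _ fun _ ↦ pow_zero _, appellWeight, rpow_shift,
    prod_mul_distrib]
  ring

lemma integrableOn_eval_mul_appellWeight (hα : ∀ i, -1 < α i) (hβ : -1 < β) (f : MPoly d) :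
    IntegrableOn (fun x ↦ eval x f * appellWeight α β x) (simplexSet d) := by
  induction f using MvPolynomial.induction_on' with
  | monomial n c =>
    exact IntegrableOn.congr_fun
      ((integrableOn_appellWeight (fun i ↦ neg_one_lt_add_natCast (hα i) (n i)) hβ).const_mul c)
      (fun x hx ↦ (eval_monomial_mul_appellWeight hα β n c hx).symm) (measurableSet_simplexSet d)
  | add p q hp hq =>
    simp only [map_add, add_mul]
    exact hp.add hq

/-- The Appell moment functional, as a linear map. The bounds on the exponents are arguments because
additivity needs polynomials to be integrable against the weight. -/
def appellFunctional (hα : ∀ i, -1 < α i) (hβ : -1 < β) : MomF d where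
  toFun := appellInt α β
  map_add' f g := by
    simp only [appellInt, map_add, add_mul]
    exact integral_add (integrableOn_eval_mul_appellWeight hα hβ f)
      (integrableOn_eval_mul_appellWeight hα hβ g)
  map_smul' c f := by
    simp only [appellInt, smul_eval, mul_assoc, integral_const_mul, RingHom.id_apply, smul_eq_mul]

lemma appellFunctional_monomial (hα : ∀ i, -1 < α i) (hβ : -1 < β) (n : Fin d →₀ ℕ) :
    appellFunctional hα hβ (monomial n 1) = multivariateBeta (fun i ↦ α i + n i) β := by
  calc ∫ x in simplexSet d, eval x (monomial n 1) * appellWeight α β x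
      = ∫ x in simplexSet d, appellWeight (fun i ↦ α i + n i) β x :=
        setIntegral_congr_fun (measurableSet_simplexSet d) fun x hx ↦ by
          simpa only [one_mul] using eval_monomial_mul_appellWeight hα β n 1 hx
    _ = multivariateBeta (fun i ↦ α i + n i) β :=
        integral_appellWeight (fun i ↦ neg_one_lt_add_natCast (hα i) (n i)) hβ

lemma appellFunctional_monomial_add_single (hα : ∀ i, -1 < α i) (hβ : -1 < β)
    (n : Fin d →₀ ℕ) (i : Fin d) :
    (∑ k, α k + β + d + 1 + n.degree) *
        appellFunctional hα hβ (monomial (n + Finsupp.single i 1) 1) =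
      (α i + 1 + n i) * appellFunctional hα hβ (monomial n 1) := by
  have hn (j : Fin d) : -1 < α j + n j := neg_one_lt_add_natCast (hα j) (n j)
  have htotal := sum_add_card_pos hn hβ
  have shift : (fun j ↦ α j + (n + Finsupp.single i 1 : Fin d →₀ ℕ) j) =
      (fun j ↦ α j + n j) + Pi.single i 1 := by
    ext j
    simp [Finsupp.single_apply, Pi.single_apply, eq_comm, add_assoc]
  have total : ∑ k, α k + β + d + 1 + n.degree = ∑ k, (α k + n k) + β + d + 1 := by
    rw [Finsupp.degree_eq_sum, sum_add_distrib]
    push_cast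
    ring
  rw [Fintype.card_fin] at htotal
  rw [appellFunctional_monomial, appellFunctional_monomial, shift, total,
    multivariateBeta_add_single i (neg_lt_iff_pos_add.1 (hn i)).ne' htotal.ne', add_right_comm]

end AppellFunctional

section PearsonEquation

variable {d : ℕ} {α : Fin d → ℝ} {β : ℝ}

lemma pearson_of_forall_monomial {u : MomF d} {Φ : Matrix (Fin d) (Fin d) (MPoly d)}
    {Ψ : Fin d → MPoly d} (h : ∀ (n : Fin d →₀ ℕ) (i : Fin d),
      u (∑ j, Φ i j * pderiv j (monomial n 1) + Ψ i * monomial n 1) = 0) : Pearson u Φ Ψ := by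
  intro f i
  let L : MPoly d →ₗ[ℝ] ℝ := u ∘ₗ (∑ j, LinearMap.mulLeft ℝ (Φ i j) ∘ₗ (pderiv j).toLinearMap +
    LinearMap.mulLeft ℝ (Ψ i))
  have L_apply (g : MPoly d) : L g = u (∑ j, Φ i j * pderiv j g + Ψ i * g) := by simp [L]
  have L_eq_zero : L = 0 := (basisMonomials (Fin d) ℝ).ext fun n ↦ by
    rw [coe_basisMonomials, L_apply, h, LinearMap.zero_apply]
  rw [← L_apply, L_eq_zero, LinearMap.zero_apply]

/-- The matrix `Φ` of the Pearson equation of the Appell functional. -/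
def appellPhi (d : ℕ) : Matrix (Fin d) (Fin d) (MPoly d) :=
  Matrix.of fun i j ↦ if i = j then X i * (X i - 1) else X i * X j

/-- The vector `Ψ` of the Pearson equation of the Appell functional. -/
def appellPsi (α : Fin d → ℝ) (β : ℝ) (i : Fin d) : MPoly d :=
  C (∑ k, α k + β + d + 1) * X i - C (α i + 1)

lemma sum_appellPhi_mul_pderiv (f : MPoly d) (i : Fin d) :
    ∑ j, appellPhi d i j * pderiv j f = X i * ∑ j, X j * pderiv j f - X i * pderiv i f := by
  have entry (j : Fin d) : appellPhi d i j = X i * X j - if i = j then X i else 0 := by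
    rw [appellPhi, Matrix.of_apply]
    split_ifs with hij
    · rw [hij, mul_sub, mul_one]
    · rw [sub_zero]
  simp only [entry, sub_mul, ite_mul, zero_mul, sum_sub_distrib, sum_ite_eq, mem_univ, if_true,
    mul_assoc, mul_sum]

lemma appellPhi_appellPsi_monomial (α : Fin d → ℝ) (β : ℝ) (n : Fin d →₀ ℕ) (i : Fin d) :
    ∑ j, appellPhi d i j * pderiv j (monomial n 1) + appellPsi α β i * monomial n 1 =
      (∑ k, α k + β + d + 1 + n.degree) • monomial (n + Finsupp.single i 1) (1 : ℝ) -
        (α i + 1 + n i) • monomial n 1 := by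
  have euler : ∑ j, X j * pderiv j (monomial n (1 : ℝ)) = n.degree • monomial n 1 :=
    (isHomogeneous_monomial 1 rfl).sum_X_mul_pderiv
  have X_mul : monomial (n + Finsupp.single i 1) (1 : ℝ) = X i * monomial n 1 := by
    rw [X, monomial_mul, one_mul, add_comm]
  rw [sum_appellPhi_mul_pderiv, euler, X_mul_pderiv_monomial, X_mul, appellPsi]
  simp only [smul_eq_C_mul, nsmul_eq_mul, map_add, map_natCast]
  ring

theorem pearson_appellFunctional (hα : ∀ i, -1 < α i) (hβ : -1 < β) :
    Pearson (appellFunctional hα hβ) (appellPhi d) (appellPsi α β) :=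
  pearson_of_forall_monomial fun n i ↦ by
    rw [appellPhi_appellPsi_monomial, map_sub, map_smul, map_smul, smul_eq_mul, smul_eq_mul,
      appellFunctional_monomial_add_single, sub_self]

lemma totalDegree_appellPhi (i j : Fin d) : (appellPhi d i j).totalDegree = 2 := by
  rw [appellPhi, Matrix.of_apply]
  split_ifs
  · have hdeg : (X i - 1 : MPoly d).totalDegree = 1 := by
      simpa using totalDegree_C_mul_X_sub_C (one_ne_zero : (1 : ℝ) ≠ 0) 1 i
    have hne : (X i - 1 : MPoly d) ≠ 0 := fun h ↦ by simp [h] at hdeg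
    rw [totalDegree_mul_of_isDomain (X_ne_zero i) hne, totalDegree_X, hdeg]
  · rw [totalDegree_mul_of_isDomain (X_ne_zero i) (X_ne_zero j), totalDegree_X, totalDegree_X]

lemma matDeg_appellPhi [NeZero d] : matDeg (appellPhi d) = 2 := by
  simp only [matDeg, totalDegree_appellPhi]
  exact sup_const univ_nonempty 2

lemma vecDeg_appellPsi [NeZero d] (hα : ∀ i, -1 < α i) (hβ : -1 < β) :
    vecDeg (appellPsi α β) = 1 := by
  have htotal := sum_add_card_pos hα hβ
  rw [Fintype.card_fin] at htotal
  simp only [vecDeg, appellPsi, totalDegree_C_mul_X_sub_C htotal.ne']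
  exact sup_const univ_nonempty 1

end PearsonEquation

/-- **Appell polynomials are classical.**
The Appell moment functional on the `d`-simplex satisfies the matrix Pearson
equation `div(Φ u) = Ψᵗ u` with `φ_ii = xᵢ(xᵢ − 1)`, `φ_ij = xᵢ xⱼ` (`i ≠ j`),
`ψ_i = (|α| + β + d + 1) xᵢ − (αᵢ + 1)`; moreover `deg Φ = 2`, `deg Ψ = 1`,
so `s = max{deg Φ − 2, deg Ψ − 1} = 0`. -/
theorem appell_is_classical
    {d : ℕ} (hd : 1 ≤ d)
    (α : Fin d → ℝ) (hα : ∀ i, -1 < α i) (β : ℝ) (hβ : -1 < β)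
    (Φ : Matrix (Fin d) (Fin d) (MPoly d))
    (hΦ : Φ = Matrix.of fun i j => if i = j then
      MvPolynomial.X i * (MvPolynomial.X i - 1) else MvPolynomial.X i * MvPolynomial.X j)
    (Ψ : Fin d → MPoly d)
    (hΨ : Ψ = fun i => MvPolynomial.C ((∑ k, α k) + β + d + 1) * MvPolynomial.X i -
      MvPolynomial.C (α i + 1)) :
    (∀ (f : MPoly d) (i : Fin d),
      appellInt α β (∑ j, Φ i j * pderiv j f + Ψ i * f) = 0) ∧
    matDeg Φ = 2 ∧ vecDeg Ψ = 1 := by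
  have : NeZero d := ⟨Nat.one_le_iff_ne_zero.1 hd⟩
  subst hΦ hΨ
  exact ⟨pearson_appellFunctional hα hβ, matDeg_appellPhi, vecDeg_appellPsi hα hβ⟩
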